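/- For every real η with 0 < η ≤ 1/2 and every a > 0, one has ∫₀^∞ 2·√(2π)·(x/η)·φ_η(x)·Φ̃_{1−η}(x) · min(1, a·η^{1/2}/x) dx ≤ 2a. -/

import Mathlib

open MeasureTheory

/-- `φ_v(x) = (2πv)^{-1/2} exp(-x²/(2v))`, the centered Gaussian density of variance `v`. -/
noncomputable def gaussDensity (v x : ℝ) : ℝ :=
  (Real.sqrt (2 * Real.pi * v))⁻¹ * Real.exp (-x ^ 2 / (2 * v))

/-- `Φ̃_v(x) = ∫₀^x φ_v(w) dw`. -/
noncomputable def gaussPartialCDF (v x : ℝ) : ℝ :=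
  ∫ w in (0 : ℝ)..x, gaussDensity v w

lemma gd_eq (v x : ℝ) :
    gaussDensity v x = (Real.sqrt (2 * Real.pi * v))⁻¹ * Real.exp (-(1 / (2 * v)) * x ^ 2) := by
  unfold gaussDensity
  congr 2
  ring

lemma gd_nonneg (v x : ℝ) : 0 ≤ gaussDensity v x := by
  unfold gaussDensity; positivity

lemma gd_cont (v : ℝ) : Continuous (gaussDensity v) := by
  unfold gaussDensity; fun_prop

lemma gp_nonneg (v x : ℝ) (hx : 0 ≤ x) : 0 ≤ gaussPartialCDF v x :=
  intervalIntegral.integral_nonneg hx (fun w _ => gd_nonneg v w)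

lemma gp_le_lin (v x : ℝ) (hv : 0 < v) (hx : 0 ≤ x) :
    gaussPartialCDF v x ≤ x * (Real.sqrt (2 * Real.pi * v))⁻¹ := by
  have h : gaussPartialCDF v x ≤ ∫ w in (0 : ℝ)..x, (Real.sqrt (2 * Real.pi * v))⁻¹ := by
    apply intervalIntegral.integral_mono_on hx
    · exact (gd_cont v).intervalIntegrable _ _
    · simp
    · intro w _
      rw [gd_eq]
      apply mul_le_of_le_one_right (by positivity)
      apply Real.exp_le_one_iff.2
      have : 0 ≤ 1 / (2 * v) * w ^ 2 := by positivity
      linarith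
  simpa using h

lemma gp_le_half (v x : ℝ) (hv : 0 < v) (hx : 0 ≤ x) :
    gaussPartialCDF v x ≤ 1 / 2 := by
  have hb : 0 < 1 / (2 * v) := by positivity
  have hI : Integrable (fun w => gaussDensity v w) := by
    simp only [gd_eq]
    exact (integrable_exp_neg_mul_sq hb).const_mul _
  have h2 : ∫ w in Set.Ioi (0 : ℝ), gaussDensity v w = 1 / 2 := by
    simp only [gd_eq]
    rw [integral_const_mul, integral_gaussian_Ioi]
    have : Real.pi / (1 / (2 * v)) = 2 * Real.pi * v := by field_simp
    rw [this]
    have : Real.sqrt (2 * Real.pi * v) ≠ 0 := by positivity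
    field_simp
  rw [← h2]
  unfold gaussPartialCDF
  rw [intervalIntegral.integral_of_le hx]
  apply setIntegral_mono_set hI.integrableOn
  · exact Filter.Eventually.of_forall (fun w => gd_nonneg v w)
  · exact (Set.Ioc_subset_Ioi_self).eventuallyLE

lemma int_x_exp (b : ℝ) (hb : 0 < b) :
    ∫ x in Set.Ioi (0 : ℝ), x * Real.exp (-b * x ^ 2) = 1 / (2 * b) := by
  have := integral_rpow_mul_exp_neg_mul_rpow (p := 2) (q := 1) (b := b) (by norm_num) (by norm_num) hb
  norm_num at this
  simp only [neg_mul]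
  rw [this, Real.rpow_neg_one]
  ring

/-- pointwise bound before estimating the partial CDF -/
lemma pt_bound (η a x G K : ℝ) (hη0 : 0 < η) (ha : 0 < a) (hx : 0 < x) (hG : 0 ≤ G) (hK : G ≤ K) :
    2 * Real.sqrt (2 * Real.pi) * (x / η) * gaussDensity η x * G * min 1 (a * Real.sqrt η / x)
      ≤ 2 * a / η * K * Real.exp (-(1 / (2 * η)) * x ^ 2) := by
  rw [gd_eq]
  set E := Real.exp (-(1 / (2 * η)) * x ^ 2)
  have hE : 0 < E := Real.exp_pos _
  calc _ ≤ 2 * Real.sqrt (2 * Real.pi) * (x / η) * ((Real.sqrt (2 * Real.pi * η))⁻¹ * E) * K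
          * (a * Real.sqrt η / x) := by
        have := min_le_right 1 (a * Real.sqrt η / x)
        have h0 : 0 ≤ min 1 (a * Real.sqrt η / x) := by positivity
        have := hG.trans hK
        gcongr
    _ = _ := by
        rw [Real.sqrt_mul (by positivity : 0 ≤ 2 * Real.pi) η]
        have h1 : Real.sqrt (2 * Real.pi) ≠ 0 := by positivity
        have h2 : Real.sqrt η ≠ 0 := by positivity
        field_simp

/-- For every real `η` with `0 < η ≤ 1` and every `a > 0`,
`∫₀^∞ 2√(2π) (x/η) φ_η(x) Φ̃_{1-η}(x) · min(1, a√η/x) dx ≤ 2a`; this is the key estimate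
yielding `P(inf_{u ∈ [η,1]} B_me(u) < a η^{1/2}) ≤ 2a` for the standard Brownian meander. -/
theorem stmt_9 (η a : ℝ) (hη0 : 0 < η) (hη : η ≤ 1) (ha : 0 < a) :
    (∫ x in Set.Ioi (0 : ℝ),
        2 * Real.sqrt (2 * Real.pi) * (x / η) * gaussDensity η x *
            gaussPartialCDF (1 - η) x * min 1 (a * Real.sqrt η / x))
      ≤ 2 * a := by
  rcases eq_or_lt_of_le hη with rfl | h1
  · simp [gaussPartialCDF, gaussDensity]
    exact ha.le
  have hv : 0 < 1 - η := by linarith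
  have hb : 0 < 1 / (2 * η) := by positivity
  have hnn : 0 ≤ᵐ[volume.restrict (Set.Ioi (0 : ℝ))] fun x =>
      2 * Real.sqrt (2 * Real.pi) * (x / η) * gaussDensity η x *
            gaussPartialCDF (1 - η) x * min 1 (a * Real.sqrt η / x) := by
    filter_upwards [ae_restrict_mem measurableSet_Ioi] with x hx
    have hx : 0 < x := hx
    have := gp_nonneg (1 - η) x hx.le
    have := gd_nonneg η x
    simp only [Pi.zero_apply]
    positivity
  have hpi := Real.pi_gt_three
  have hpi' := Real.pi_lt_four
  by_cases hh : η ≤ 1 / 2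
  · have hle := integral_mono_of_nonneg hnn
      (g := fun x => (2 * a / η * (Real.sqrt (2 * Real.pi * (1 - η)))⁻¹)
          * (x * Real.exp (-(1 / (2 * η)) * x ^ 2)))
      ((integrable_mul_exp_neg_mul_sq hb).const_mul _).integrableOn (by
        filter_upwards [ae_restrict_mem measurableSet_Ioi] with x hx
        have hx : 0 < x := hx
        refine (pt_bound η a x _ _ hη0 ha hx (gp_nonneg _ x hx.le) (gp_le_lin _ x hv hx.le)).trans
          (le_of_eq ?_)
        ring)
    refine hle.trans ?_
    rw [integral_const_mul, int_x_exp _ hb]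
    have hs : 1 ≤ Real.sqrt (2 * Real.pi * (1 - η)) := by
      rw [Real.one_le_sqrt]; nlinarith
    have hs' := inv_le_one_of_one_le₀ hs
    have : 2 * a / η * (Real.sqrt (2 * Real.pi * (1 - η)))⁻¹ * (1 / (2 * (1 / (2 * η))))
        = 2 * a * (Real.sqrt (2 * Real.pi * (1 - η)))⁻¹ := by
      field_simp
    rw [this]
    exact mul_le_of_le_one_right (by positivity) hs'
  · push Not at hh
    have hle := integral_mono_of_nonneg hnn
      (g := fun x => (2 * a / η * (1 / 2)) * Real.exp (-(1 / (2 * η)) * x ^ 2))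
      ((integrable_exp_neg_mul_sq hb).const_mul _).integrableOn (by
        filter_upwards [ae_restrict_mem measurableSet_Ioi] with x hx
        have hx : 0 < x := hx
        exact pt_bound η a x _ _ hη0 ha hx (gp_nonneg _ x hx.le) (gp_le_half _ x hv hx.le))
    refine hle.trans ?_
    rw [integral_const_mul, integral_gaussian_Ioi]
    have hs : Real.sqrt (Real.pi / (1 / (2 * η))) ≤ 4 * η := by
      apply Real.sqrt_le_iff.2
      refine ⟨by positivity, ?_⟩
      have : Real.pi / (1 / (2 * η)) = 2 * Real.pi * η := by field_simp
      rw [this]; nlinarith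
    calc _ ≤ 2 * a / η * (1 / 2) * (4 * η / 2) := by gcongr
      _ = 2 * a := by field_simp; norm_num
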